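/- Let q = p^α where p ≡ 1 (mod 8) is prime and α ≥ 1. Let χ₄ be a Dirichlet character mod q of order 4, let φ = χ₄² be the quadratic character and ε the trivial character mod q. Set ρ = J(χ₄,χ₄), ξ = J(χ₄,φ), M₃ = q²·₃F₂(χ₄, χ̄₄, χ̄₄; φ, ε | 1) and M₅ = q²·₃F₂(χ₄, χ₄, χ̄₄; ε, ε | 1). Then the number of cliques of order 4 in the Peisert-like graph G*(q) satisfies k₄(G*(q)) = (p^{2α−1}(p−1)/3072)·[ 2p^{2α−2}(p²−20p+81) + 2·Im(ρ)² + 4·Im(ρ)·Im(ξ) − Re(M₃) + 3·M₅ ] (an equality of complex numbers, the left side being a natural number). -/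

import Mathlib

open Finset

def peisertSet (n : ℕ) (g : (ZMod n)ˣ) : Set (ZMod n) :=
  {z | ∃ k : ℤ, z = ((g ^ (4 * k) : (ZMod n)ˣ) : ZMod n) ∨ z = ((g * g ^ (4 * k) : (ZMod n)ˣ) : ZMod n)}

def peisertGraph (n : ℕ) (g : (ZMod n)ˣ) : SimpleGraph (ZMod n) :=
  SimpleGraph.fromRel (fun x y => x - y ∈ peisertSet n g)

noncomputable instance (n : ℕ) (g : (ZMod n)ˣ) : DecidableRel (peisertGraph n g).Adj :=
  Classical.decRel _

/-- The complex-conjugate Dirichlet character. -/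
noncomputable def conjChar {q : ℕ} (A : DirichletCharacter ℂ q) : DirichletCharacter ℂ q :=
  A.ringHomComp (starRingEnd ℂ)

/-- The binomial coefficient `binom(A,B) = B(-1)/q * J(A, B̄)` for Dirichlet characters. -/
noncomputable def dBinom {q : ℕ} [NeZero q] (A B : DirichletCharacter ℂ q) : ℂ :=
  B (-1) / q * jacobiSum A (conjChar B)

/-- The hypergeometric function `₃F₂` for Dirichlet characters. -/
noncomputable def threeF₂ {q : ℕ} [NeZero q] (A B C D E : DirichletCharacter ℂ q)
    (x : ZMod q) : ℂ :=
  (q / (Nat.totient q : ℂ)) *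
    ∑ᶠ χ : DirichletCharacter ℂ q,
      dBinom (A * χ) χ * dBinom (B * χ) (D * χ) * dBinom (C * χ) (E * χ) * χ x

/-!
The indicator of the connection set is `(ν + s) / 2`, where `ν` is the indicator of the nonzero
residues and `s`, a combination of the quartic character `χ` and its inverse, is `±1`-valued on
units. Expanding the product over the six edges of `K₄` gives a sum over the subgraphs of `K₄`, an
edge carrying `s` if it is kept and `ν` if it is not. Subgraphs with an odd number of edges drop out
because scaling by an element where `χ` is a square root of `-1` rotates their monomials in `χ`; the
small ones are elementary; the four-cycle contributes `Im J(χ, χ)`. For `K₄` itself, inverting about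
one vertex and normalising two others to `0` and `1` leaves a double character sum, which
orthogonality of characters identifies with a value of `₃F₂` at `1`. Modulo a prime power everything
is pulled back from the prime field, since a character of order `4` is induced from level `p`.
-/

section FiberSums

variable {V W S : Type*} [AddGroup V] [AddGroup W] [Fintype V] [Fintype W]

lemma sum_comp_of_surjective [Semiring S] {π : V →+ W} (hπ : Function.Surjective π) (f : W → S) :
    ∑ x, f (π x) = Nat.card π.ker * ∑ y, f y := by
  classical
  have card_fiber (y : W) : #{x | π x = y} = Nat.card π.ker := by
    rw [AddMonoidHom.card_fiber_eq_of_mem_range π (hπ y) (hπ 0)]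
    exact (Nat.subtype_card _ fun x => by simp [AddMonoidHom.mem_ker]).symm
  rw [← sum_fiberwise' univ π f, mul_sum]
  exact sum_congr rfl fun y _ => by rw [sum_const, card_fiber, nsmul_eq_mul]

lemma card_eq_card_ker_mul_card {π : V →+ W} (hπ : Function.Surjective π) :
    Fintype.card V = Nat.card π.ker * Fintype.card W := by
  simpa only [sum_const, card_univ, smul_eq_mul, mul_one, Nat.cast_id] using
    sum_comp_of_surjective hπ fun _ => (1 : ℕ)

end FiberSums

section EdgeSum

variable {V W S : Type*} [AddCommGroup V] [Fintype V] [CommRing S]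

/-- The weighted count of quadruples `(x, y, z, w)`, viewed as labelled copies of `K₄`: each edge
carries the value of its weight at the difference of its endpoints. The weights are listed in the
order `xy, xz, xw, yz, yw, zw` of the edges. -/
def edgeSum (A B C D E F : V → S) : S :=
  ∑ x, ∑ y, ∑ z, ∑ w, A (x - y) * B (x - z) * C (x - w) * D (y - z) * E (y - w) * F (z - w)

lemma edgeSum_swap_fst {A : V → S} (hA : A.Even) (B C D E F : V → S) :
    edgeSum A B C D E F = edgeSum A D E B C F := by
  unfold edgeSum
  rw [sum_comm]
  refine sum_congr rfl fun y _ => sum_congr rfl fun x _ => sum_congr rfl fun z _ =>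
    sum_congr rfl fun w _ => ?_
  rw [← hA (x - y), neg_sub]
  ring

lemma edgeSum_swap_mid {D : V → S} (hD : D.Even) (A B C E F : V → S) :
    edgeSum A B C D E F = edgeSum B A C D F E := by
  unfold edgeSum
  refine sum_congr rfl fun x _ => ?_
  rw [sum_comm]
  refine sum_congr rfl fun z _ => sum_congr rfl fun y _ => sum_congr rfl fun w _ => ?_
  rw [← hD (y - z), neg_sub]
  ring

lemma edgeSum_swap_last {F : V → S} (hF : F.Even) (A B C D E : V → S) :
    edgeSum A B C D E F = edgeSum A C B E D F := by
  unfold edgeSum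
  refine sum_congr rfl fun x _ => sum_congr rfl fun y _ => ?_
  rw [sum_comm]
  refine sum_congr rfl fun w _ => sum_congr rfl fun z _ => ?_
  rw [← hF (z - w), neg_sub]
  ring

lemma edgeSum_smul (a b c d e f : S) (A B C D E F : V → S) :
    edgeSum (a • A) (b • B) (c • C) (d • D) (e • E) (f • F) =
      a * b * c * d * e * f * edgeSum A B C D E F := by
  simp only [edgeSum, mul_sum, Pi.smul_apply, smul_eq_mul]
  refine sum_congr rfl fun x _ => sum_congr rfl fun y _ => sum_congr rfl fun z _ =>
    sum_congr rfl fun w _ => ?_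
  ring

lemma edgeSum_comp_of_surjective [AddCommGroup W] [Fintype W] {π : V →+ W}
    (hπ : Function.Surjective π) (A B C D E F : W → S) :
    edgeSum (A ∘ π) (B ∘ π) (C ∘ π) (D ∘ π) (E ∘ π) (F ∘ π) =
      (Nat.card π.ker : S) ^ 4 * edgeSum A B C D E F := by
  let k (x y z w : W) : S :=
    A (x - y) * B (x - z) * C (x - w) * D (y - z) * E (y - w) * F (z - w)
  have sum_w (x y z) := sum_comp_of_surjective hπ (k x y z)
  have sum_z (x y) := sum_comp_of_surjective hπ fun z => ∑ w, k x y z w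
  have sum_y (x) := sum_comp_of_surjective hπ fun y => ∑ z, ∑ w, k x y z w
  have sum_x := sum_comp_of_surjective hπ fun x => ∑ y, ∑ z, ∑ w, k x y z w
  calc _ = ∑ x, ∑ y, ∑ z, ∑ w, k (π x) (π y) (π z) (π w) := by
        simp only [edgeSum, Function.comp_apply, map_sub, k]
    _ = (Nat.card π.ker : S) ^ 4 * ∑ x, ∑ y, ∑ z, ∑ w, k x y z w := by
        simp only [sum_w, ← mul_sum, sum_z, sum_y, sum_x]
        ring

/- The `64` terms fall into the `11` isomorphism classes of graphs on four vertices, according to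
the edges on which `Y` is chosen. Transpositions of consecutive vertices generate all relabellings,
so the three `edgeSum_swap` lemmas identify the terms within each class. -/
lemma edgeSum_add {X Y : V → S} (hX : X.Even) (hY : Y.Even) :
    edgeSum (X + Y) (X + Y) (X + Y) (X + Y) (X + Y) (X + Y) =
      edgeSum X X X X X X + 6 * edgeSum X X Y X X X +
      12 * edgeSum Y Y X X X X + 3 * edgeSum X X Y Y X X +
      4 * edgeSum X X Y X Y Y + 4 * edgeSum Y Y X Y X X + 12 * edgeSum Y X X X Y Y +
      3 * edgeSum X Y Y Y Y X + 12 * edgeSum Y Y Y Y X X +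
      6 * edgeSum Y Y X Y Y Y + edgeSum Y Y Y Y Y Y := by
  let T (a b c d e f : Bool) : S :=
    edgeSum (cond a X Y) (cond b X Y) (cond c X Y) (cond d X Y) (cond e X Y) (cond f X Y)
  have even_cond (b : Bool) : (cond b X Y).Even := by cases b <;> assumption
  have swap_fst (a b c d e f) : T a b c d e f = T a d e b c f := edgeSum_swap_fst (even_cond a) ..
  have swap_mid (a b c d e f) : T a b c d e f = T b a c d f e := edgeSum_swap_mid (even_cond d) ..
  have swap_last (a b c d e f) : T a b c d e f = T a c b e d f :=
    edgeSum_swap_last (even_cond f) ..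
  have expand : edgeSum (X + Y) (X + Y) (X + Y) (X + Y) (X + Y) (X + Y) =
      ∑ a, ∑ b, ∑ c, ∑ d, ∑ e, ∑ f, T a b c d e f := by
    simp only [T, edgeSum, Fintype.sum_bool, cond, Pi.add_apply, ← sum_add_distrib]
    refine sum_congr rfl fun x _ => sum_congr rfl fun y _ => sum_congr rfl fun z _ =>
      sum_congr rfl fun w _ => ?_
    ring
  rw [expand]
  change _ = T true true true true true true + 6 * T true true false true true true +
      12 * T false false true true true true + 3 * T true true false false true true +
      4 * T true true false true false false + 4 * T false false true false true true +
      12 * T false true true true false false +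
      3 * T true false false false false true + 12 * T false false false false true true +
      6 * T false false true false false false + T false false false false false false
  clear_value T
  simp only [Fintype.sum_bool]
  grind

end EdgeSum

section SumSub

variable {V S : Type*} [AddCommGroup V] [Fintype V]

lemma sum_comp_sub [AddCommMonoid S] (f : V → S) (x : V) : ∑ y, f (x - y) = ∑ y, f y :=
  (Equiv.subLeft x).sum_comp f

lemma sum_sum_comp_sub [Semiring S] (f : V → S) :
    ∑ x, ∑ y, f (x - y) = Fintype.card V * ∑ x, f x := by
  simp [sum_comp_sub]

end SumSub

section NonzeroInd

variable {V S : Type*} [Zero V] [DecidableEq V]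

/-- The indicator function of the nonzero elements: the edge weight that only excludes coinciding
endpoints. -/
def nonzeroInd [Zero S] [One S] (x : V) : S :=
  if x = 0 then 0 else 1

lemma nonzeroInd_zero [Zero S] [One S] : nonzeroInd (0 : V) = (0 : S) := if_pos rfl

lemma nonzeroInd_of_ne_zero [Zero S] [One S] {x : V} (hx : x ≠ 0) : nonzeroInd x = (1 : S) :=
  if_neg hx

lemma mul_nonzeroInd [MulZeroOneClass S] {f : V → S} (hf : f 0 = 0) (x : V) :
    f x * nonzeroInd x = f x := by
  by_cases hx : x = 0
  · rw [hx, hf, zero_mul]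
  · rw [nonzeroInd_of_ne_zero hx, mul_one]

lemma nonzeroInd_mul_self [MulZeroOneClass S] (x : V) :
    nonzeroInd x * nonzeroInd x = (nonzeroInd x : S) :=
  mul_nonzeroInd nonzeroInd_zero x

end NonzeroInd

section NonzeroIndSums

variable {V S : Type*} [AddCommGroup V] [DecidableEq V] [CommRing S]

lemma nonzeroInd_even : (nonzeroInd : V → S).Even := fun x => by simp [nonzeroInd]

variable [Fintype V]

lemma sum_mul_nonzeroInd_sub (f : V → S) (z : V) :
    ∑ w, f w * nonzeroInd (z - w) = ∑ w, f w - f z := by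
  have h (w : V) : f w * nonzeroInd (z - w) = f w - if z = w then f w else 0 := by
    by_cases hzw : z = w <;> simp [nonzeroInd, hzw, sub_eq_zero]
  simp [h, sum_sub_distrib]

lemma sum_sub_mul_nonzeroInd_sub (f : V → S) (x y : V) :
    ∑ z, f (x - z) * nonzeroInd (y - z) = ∑ z, f z - f (x - y) := by
  rw [sum_mul_nonzeroInd_sub fun z => f (x - z), sum_comp_sub]

lemma sum_nonzeroInd : ∑ x : V, nonzeroInd x = (Fintype.card V - 1 : S) := by
  rw [← sum_comp_sub _ 0]
  simpa using sum_mul_nonzeroInd_sub (fun _ => (1 : S)) (0 : V)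

lemma edgeSum_pendant {D : V → S} (hD : D 0 = 0) (A B C : V → S) :
    edgeSum A B C D nonzeroInd nonzeroInd =
      ∑ x, ∑ y, ∑ z, A (x - y) * B (x - z) * D (y - z) *
        (∑ w, C w - C (x - y) - C (x - z)) := by
  unfold edgeSum
  refine sum_congr rfl fun x _ => sum_congr rfl fun y _ => sum_congr rfl fun z _ => ?_
  have sum_w : ∑ w, C (x - w) * nonzeroInd (y - w) * nonzeroInd (z - w) =
      ∑ w, C w - C (x - y) - C (x - z) * nonzeroInd (y - z) := by
    rw [sum_mul_nonzeroInd_sub fun w => C (x - w) * nonzeroInd (y - w), sum_sub_mul_nonzeroInd_sub]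
  calc _ = A (x - y) * B (x - z) * D (y - z) *
        ∑ w, C (x - w) * nonzeroInd (y - w) * nonzeroInd (z - w) := by
        rw [mul_sum]
        exact sum_congr rfl fun w _ => by ring
    _ = _ := by
        rw [sum_w]
        linear_combination -A (x - y) * B (x - z) * C (x - z) * mul_nonzeroInd hD (y - z)

lemma edgeSum_nonzeroInd :
    edgeSum (V := V) nonzeroInd nonzeroInd nonzeroInd nonzeroInd nonzeroInd nonzeroInd =
      (Fintype.card V * (Fintype.card V - 1) * (Fintype.card V - 2) *
        (Fintype.card V - 3) : S) := by
  rw [edgeSum_pendant nonzeroInd_zero, sum_nonzeroInd]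
  set n : S := (Fintype.card V : S)
  have sum_z (x y : V) : ∑ z, nonzeroInd (x - y) * nonzeroInd (x - z) * nonzeroInd (y - z) *
      (n - 1 - nonzeroInd (x - y) - nonzeroInd (x - z)) =
      (n - 3) * (n - 2) * nonzeroInd (x - y) := by
    calc _ = ∑ z, (n - 3) * nonzeroInd (x - y) * (nonzeroInd (x - z) * nonzeroInd (y - z)) := by
          refine sum_congr rfl fun z _ => ?_
          linear_combination
            -nonzeroInd (x - z) * nonzeroInd (y - z) * nonzeroInd_mul_self (S := S) (x - y) -
              nonzeroInd (x - y) * nonzeroInd (y - z) * nonzeroInd_mul_self (S := S) (x - z)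
      _ = _ := by
          rw [← mul_sum, sum_sub_mul_nonzeroInd_sub, sum_nonzeroInd]
          linear_combination (3 - n) * nonzeroInd_mul_self (S := S) (x - y)
  simp only [sum_z, ← mul_sum, sum_sum_comp_sub, sum_nonzeroInd]
  ring

end NonzeroIndSums

/-- An even function taking a value of square one at each nonzero element, vanishing at zero, and
with as many positive as negative values. -/
structure IsBalancedSign {V S : Type*} [AddCommGroup V] [DecidableEq V] [Fintype V] [CommRing S]
    (s : V → S) : Prop where
  even : s.Even
  sq_eq (x : V) : s x ^ 2 = nonzeroInd x
  sum_eq_zero : ∑ x, s x = 0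

namespace IsBalancedSign

variable {V S : Type*} [AddCommGroup V] [DecidableEq V] [Fintype V] [CommRing S] {s : V → S}

lemma sum_sum_sum_path (hs : IsBalancedSign s) :
    ∑ x, ∑ y, ∑ z, s (x - y) * (s (y - z) * nonzeroInd (x - z)) =
      -(Fintype.card V * (Fintype.card V - 1)) := by
  have sum_z (x y : V) : s (x - y) * (0 - s (y - x)) = -1 * nonzeroInd (x - y) := by
    rw [← hs.even (y - x), neg_sub]
    linear_combination -hs.sq_eq (x - y)
  simp only [← mul_sum, sum_sub_mul_nonzeroInd_sub, hs.sum_eq_zero, sum_z, sum_sum_comp_sub,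
    sum_nonzeroInd]
  ring

lemma sum_sum_sum_neg_path_sub_path (hs : IsBalancedSign s) :
    ∑ x, ∑ y, ∑ z, (-(s (x - y) * (s (y - z) * nonzeroInd (x - z))) -
      s (x - z) * (s (z - y) * nonzeroInd (x - y))) =
      2 * (Fintype.card V * (Fintype.card V - 1)) := by
  have swap_yz : ∑ x, ∑ y, ∑ z, s (x - z) * (s (z - y) * nonzeroInd (x - y)) =
      -(Fintype.card V * (Fintype.card V - 1)) := by
    rw [← hs.sum_sum_sum_path]
    exact sum_congr rfl fun x _ => sum_comm
  simp only [sum_sub_distrib, sum_neg_distrib, hs.sum_sum_sum_path, swap_yz]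
  ring

lemma edgeSum_fourCycle (hs : IsBalancedSign s) :
    edgeSum nonzeroInd s s s s nonzeroInd =
      Fintype.card V * (∑ d, nonzeroInd d * (∑ t, s t * s (d - t)) ^ 2 -
        (Fintype.card V - 1) * (Fintype.card V - 2)) := by
  set n : S := (Fintype.card V : S)
  have conv (x y : V) : ∑ w, s (x - w) * s (y - w) = ∑ t, s t * s (x - y - t) := by
    rw [← sum_comp_sub (fun t => s t * s (x - y - t)) x]
    refine sum_congr rfl fun w _ => ?_
    rw [← hs.even (y - w), sub_sub_sub_cancel_left, neg_sub]
  have sum_w (x y z : V) : ∑ w, s (x - w) * s (y - w) * nonzeroInd (z - w) =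
      ∑ t, s t * s (x - y - t) - s (x - z) * s (y - z) := by
    rw [sum_mul_nonzeroInd_sub fun w => s (x - w) * s (y - w), conv]
  have sum_zw (x y : V) : ∑ z, ∑ w, nonzeroInd (x - y) * s (x - z) * s (x - w) * s (y - z) *
      s (y - w) * nonzeroInd (z - w) =
      nonzeroInd (x - y) * (∑ t, s t * s (x - y - t)) ^ 2 - (n - 2) * nonzeroInd (x - y) := by
    calc _ = ∑ z, nonzeroInd (x - y) * (s (x - z) * s (y - z)) *
          ∑ w, s (x - w) * s (y - w) * nonzeroInd (z - w) := by
          refine sum_congr rfl fun z _ => ?_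
          rw [mul_sum]
          exact sum_congr rfl fun w _ => by ring
      _ = ∑ z, nonzeroInd (x - y) * (∑ t, s t * s (x - y - t) * (s (x - z) * s (y - z)) -
            nonzeroInd (x - z) * nonzeroInd (y - z)) := by
          refine sum_congr rfl fun z _ => ?_
          rw [← sum_mul, sum_w, ← hs.sq_eq (x - z), ← hs.sq_eq (y - z)]
          ring
      _ = _ := by
          rw [← mul_sum, sum_sub_distrib, sum_sub_mul_nonzeroInd_sub, sum_nonzeroInd]
          simp only [← sum_mul, ← mul_sum, conv]
          linear_combination nonzeroInd_mul_self (S := S) (x - y)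
  simp only [edgeSum, sum_zw]
  rw [sum_sum_comp_sub fun d => nonzeroInd d * (∑ t, s t * s (d - t)) ^ 2 - (n - 2) * nonzeroInd d,
    sum_sub_distrib, ← mul_sum, sum_nonzeroInd]
  ring

variable [IsReduced S]

lemma map_zero (hs : IsBalancedSign s) : s 0 = 0 :=
  eq_zero_of_pow_eq_zero ((hs.sq_eq 0).trans nonzeroInd_zero)

lemma edgeSum_adjacent (hs : IsBalancedSign s) :
    edgeSum s s nonzeroInd nonzeroInd nonzeroInd nonzeroInd =
      -(Fintype.card V * (Fintype.card V - 1) * (Fintype.card V - 3)) := by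
  rw [edgeSum_pendant nonzeroInd_zero, sum_nonzeroInd]
  set n : S := (Fintype.card V : S)
  have sum_z (x y : V) : ∑ z, s (x - y) * s (x - z) * nonzeroInd (y - z) *
      (n - 1 - nonzeroInd (x - y) - nonzeroInd (x - z)) =
      -(n - 3) * nonzeroInd (x - y) := by
    calc _ = ∑ z, (n - 3) * s (x - y) * (s (x - z) * nonzeroInd (y - z)) := by
          refine sum_congr rfl fun z _ => ?_
          linear_combination -s (x - z) * nonzeroInd (y - z) * mul_nonzeroInd hs.map_zero (x - y) -
            s (x - y) * nonzeroInd (y - z) * mul_nonzeroInd hs.map_zero (x - z)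
      _ = _ := by
          rw [← mul_sum, sum_sub_mul_nonzeroInd_sub, hs.sum_eq_zero]
          linear_combination (3 - n) * hs.sq_eq (x - y)
  simp only [sum_z, ← mul_sum, sum_sum_comp_sub, sum_nonzeroInd]
  ring

lemma edgeSum_opposite (hs : IsBalancedSign s) :
    edgeSum nonzeroInd nonzeroInd s s nonzeroInd nonzeroInd =
      2 * (Fintype.card V * (Fintype.card V - 1)) := by
  rw [edgeSum_pendant hs.map_zero, ← hs.sum_sum_sum_neg_path_sub_path, hs.sum_eq_zero]
  refine sum_congr rfl fun x _ => sum_congr rfl fun y _ => sum_congr rfl fun z _ => ?_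
  rw [← hs.even (z - y), neg_sub]
  linear_combination -s (y - z) * nonzeroInd (x - z) * mul_nonzeroInd hs.map_zero (x - y) -
    s (y - z) * nonzeroInd (x - y) * mul_nonzeroInd hs.map_zero (x - z)

lemma edgeSum_paw (hs : IsBalancedSign s) :
    edgeSum s s s s nonzeroInd nonzeroInd = 2 * (Fintype.card V * (Fintype.card V - 1)) := by
  rw [edgeSum_pendant hs.map_zero, ← hs.sum_sum_sum_neg_path_sub_path, hs.sum_eq_zero]
  refine sum_congr rfl fun x _ => sum_congr rfl fun y _ => sum_congr rfl fun z _ => ?_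
  rw [← hs.even (z - y), neg_sub]
  linear_combination -s (y - z) * s (x - z) * hs.sq_eq (x - y) -
    s (y - z) * s (x - y) * hs.sq_eq (x - z)

end IsBalancedSign

section NormalizedEdgeSum

variable {V R S : Type*} [CommRing S]

/-- The part of `edgeSum` with the vertex `x` placed at `0`. -/
def rootedEdgeSum [AddCommGroup V] [Fintype V] (A B C D E F : V → S) : S :=
  ∑ y, ∑ z, ∑ w, A y * B z * C w * D (y - z) * E (y - w) * F (z - w)

/-- The part of `edgeSum` with the vertices `x` and `y` placed at `0` and `1`, the remaining two
vertices being `b` and `c`. -/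
def normalizedEdgeSum [CommRing R] [Fintype R] (B C D E F : MulChar R S) : S :=
  ∑ b, ∑ c, B b * C c * D (1 - b) * E (1 - c) * F (b - c)

lemma edgeSum_eq_card_mul_rootedEdgeSum [AddCommGroup V] [Fintype V] {D E F : V → S}
    (hD : D.Even) (hE : E.Even) (hF : F.Even) (A B C : V → S) :
    edgeSum A B C D E F = Fintype.card V * rootedEdgeSum A B C D E F := by
  have translate (x : V) : ∑ y, ∑ z, ∑ w, A (x - y) * B (x - z) * C (x - w) * D (y - z) *
      E (y - w) * F (z - w) = rootedEdgeSum A B C D E F := by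
    symm
    unfold rootedEdgeSum
    rw [← sum_comp_sub _ x]; refine sum_congr rfl fun y _ => ?_
    rw [← sum_comp_sub _ x]; refine sum_congr rfl fun z _ => ?_
    rw [← sum_comp_sub _ x]; refine sum_congr rfl fun w _ => ?_
    rw [← hD (y - z), ← hE (y - w), ← hF (z - w)]
    simp only [sub_sub_sub_cancel_left, neg_sub]
  simp only [edgeSum, translate, sum_const, card_univ, nsmul_eq_mul]

lemma edgeSum_eq_zero_of_scaling [IsDomain S] [AddCommGroup V] [Fintype V] {T : V →+ V}
    (hT : Function.Bijective T) {A B C D E F : V → S} {a b c d e f : S}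
    (hA : A ∘ T = a • A) (hB : B ∘ T = b • B) (hC : C ∘ T = c • C) (hD : D ∘ T = d • D)
    (hE : E ∘ T = e • E) (hF : F ∘ T = f • F) (h : a * b * c * d * e * f ≠ 1) :
    edgeSum A B C D E F = 0 := by
  have scaled := edgeSum_comp_of_surjective hT.surjective A B C D E F
  rw [hA, hB, hC, hD, hE, hF, edgeSum_smul, (AddMonoidHom.ker_eq_bot_iff T).mpr hT.injective,
    AddSubgroup.card_bot, Nat.cast_one, one_pow, one_mul] at scaled
  by_contra h0
  exact h ((mul_eq_right₀ h0).mp scaled)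

end NormalizedEdgeSum

section CharacterSums

variable {K S : Type*} [Field K] [CommRing S]

lemma even_of_map_neg_one {R : Type*} [CommRing R] {χ : MulChar R S} (h : χ (-1) = 1) :
    Function.Even χ := fun x => by
  rw [neg_eq_neg_one_mul, map_mul, h, one_mul]

lemma inv_even {χ : MulChar K S} (hχ : Function.Even χ) : Function.Even ⇑χ⁻¹ := fun x => by
  rw [MulChar.inv_apply', MulChar.inv_apply', inv_neg, hχ]

lemma map_inv_sub_inv {χ : MulChar K S} (hχ : Function.Even χ) {x y : K} (hx : x ≠ 0)
    (hy : y ≠ 0) : χ (x⁻¹ - y⁻¹) = χ⁻¹ x * χ⁻¹ y * χ (x - y) := by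
  rw [inv_sub_inv hx hy, div_eq_mul_inv, map_mul, ← hχ (y - x), neg_sub, mul_inv, map_mul,
    MulChar.inv_apply', MulChar.inv_apply']
  ring

lemma map_mul_inv_map [DecidableEq K] (χ : MulChar K S) (x : K) :
    χ x * χ⁻¹ x = nonzeroInd x := by
  by_cases hx : x = 0
  · rw [hx, MulChar.map_zero, zero_mul, nonzeroInd_zero]
  · rw [← MulChar.mul_apply, mul_inv_cancel, nonzeroInd_of_ne_zero hx,
      MulChar.one_apply (isUnit_iff_ne_zero.mpr hx)]

variable [Fintype K]

lemma edgeSum_eq_zero_of_mul_eq_zpow [IsDomain S] {A B C D E F ψ : MulChar K S} {m : ℤ}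
    (h : A * B * C * D * E * F = ψ ^ m) (hm : ¬ (orderOf ψ : ℤ) ∣ m) :
    edgeSum A B C D E F = 0 := by
  rw [orderOf_dvd_iff_zpow_eq_one, ← h] at hm
  obtain ⟨t, ht⟩ := MulChar.ne_one_iff.mp hm
  have scaling (χ : MulChar K S) : ⇑χ ∘ AddMonoidHom.mulLeft (t : K) = χ t • ⇑χ :=
    funext fun x => map_mul χ (t : K) x
  exact edgeSum_eq_zero_of_scaling (mulLeft_bijective₀ (t : K) t.ne_zero) (scaling A) (scaling B)
    (scaling C) (scaling D) (scaling E) (scaling F) (by simpa only [MulChar.mul_apply] using ht)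

lemma rootedEdgeSum_eq_mul_normalizedEdgeSum {A B C D E F : MulChar K S}
    (h : A * B * C * D * E * F = 1) :
    rootedEdgeSum A B C D E F = (Fintype.card K - 1) * normalizedEdgeSum B C D E F := by
  classical
  rw [← sum_nonzeroInd, sum_mul]
  refine sum_congr rfl fun y _ => ?_
  by_cases hy : y = 0
  · simp only [hy, MulChar.map_zero, nonzeroInd_zero, zero_mul, sum_const_zero]
  have rescale (f : K → S) : ∑ x, f x = ∑ x, f (y * x) :=
    (Equiv.sum_comp (Equiv.mulLeft₀ y hy) f).symm
  have prod_y : A y * B y * C y * D y * E y * F y = 1 := by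
    simp only [← MulChar.mul_apply, h]
    exact MulChar.one_apply (isUnit_iff_ne_zero.mpr hy)
  rw [nonzeroInd_of_ne_zero hy, one_mul, normalizedEdgeSum, rescale]
  refine sum_congr rfl fun b _ => ?_
  rw [rescale]
  refine sum_congr rfl fun c _ => ?_
  rw [← mul_sub, ← mul_one_sub, ← mul_one_sub]
  simp only [map_mul]
  linear_combination (B b * C c * D (1 - b) * E (1 - c) * F (b - c)) * prod_y

lemma edgeSum_eq_mul_normalizedEdgeSum {A B C D E F : MulChar K S} (hD : Function.Even D)
    (hE : Function.Even E) (hF : Function.Even F) (h : A * B * C * D * E * F = 1) :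
    edgeSum A B C D E F =
      Fintype.card K * (Fintype.card K - 1) * normalizedEdgeSum B C D E F := by
  rw [edgeSum_eq_card_mul_rootedEdgeSum hD hE hF, rootedEdgeSum_eq_mul_normalizedEdgeSum h,
    mul_assoc]

/- Inverting the coordinates `y`, `z`, `w` around the vertex `0` transfers the characters of the
opposite triangle to the edges at that vertex. -/
lemma rootedEdgeSum_inversion {A B C D E F : MulChar K S} (hD : Function.Even D)
    (hE : Function.Even E) (hF : Function.Even F) :
    rootedEdgeSum A B C D E F =
      rootedEdgeSum ⇑(A * D * E)⁻¹ ⇑(B * D * F)⁻¹ ⇑(C * E * F)⁻¹ D E F := by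
  have invert (f : K → S) : ∑ x, f x = ∑ x, f x⁻¹ := (Equiv.sum_comp (Equiv.inv K) f).symm
  unfold rootedEdgeSum
  rw [invert]; refine sum_congr rfl fun y _ => ?_
  rw [invert]; refine sum_congr rfl fun z _ => ?_
  rw [invert]; refine sum_congr rfl fun w _ => ?_
  by_cases hy : y = 0
  · simp [hy, MulChar.map_zero]
  by_cases hz : z = 0
  · simp [hz, MulChar.map_zero]
  by_cases hw : w = 0
  · simp [hw, MulChar.map_zero]
  rw [map_inv_sub_inv hD hy hz, map_inv_sub_inv hE hy hw, map_inv_sub_inv hF hz hw]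
  simp only [mul_inv, MulChar.mul_apply, ← MulChar.inv_apply']
  ring

lemma edgeSum_inversion {A B C D E F : MulChar K S} (hD : Function.Even D)
    (hE : Function.Even E) (hF : Function.Even F) :
    edgeSum A B C D E F = edgeSum ⇑(A * D * E)⁻¹ ⇑(B * D * F)⁻¹ ⇑(C * E * F)⁻¹ D E F := by
  rw [edgeSum_eq_card_mul_rootedEdgeSum hD hE hF, edgeSum_eq_card_mul_rootedEdgeSum hD hE hF,
    rootedEdgeSum_inversion hD hE hF]

end CharacterSums

section FiniteRing

variable {R S : Type*} [CommRing R] [Fintype R] [CommRing S]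

lemma sum_map_mul_map_sub (A B : MulChar R S) (d : Rˣ) :
    ∑ t, A t * B (d - t) = A d * B d * jacobiSum A B := by
  rw [jacobiSum, mul_sum, ← Equiv.sum_comp d.mulLeft]
  refine sum_congr rfl fun t _ => ?_
  rw [Units.mulLeft_apply, ← mul_one_sub, map_mul, map_mul]
  ring

lemma star_edgeSum (A B C D E F : MulChar R ℂ) :
    star (edgeSum A B C D E F) = edgeSum ⇑A⁻¹ ⇑B⁻¹ ⇑C⁻¹ ⇑D⁻¹ ⇑E⁻¹ ⇑F⁻¹ := by
  simp only [edgeSum, star_sum, star_mul', MulChar.star_apply']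

lemma star_jacobiSum (A B : MulChar R ℂ) : star (jacobiSum A B) = jacobiSum A⁻¹ B⁻¹ := by
  simp only [jacobiSum, star_sum, star_mul', MulChar.star_apply']

end FiniteRing

section CharacterValues

variable {R K S : Type*} [CommRing R] [Field K] [CommRing S]

lemma map_pow_eq_one_of_isUnit {χ : MulChar R S} {m : ℕ} (hχ : χ ^ m = 1) {x : R}
    (hx : IsUnit x) : χ x ^ m = 1 := by
  obtain ⟨u, rfl⟩ := hx
  rw [← MulChar.pow_apply_coe, hχ, MulChar.one_apply_coe]

lemma inv_map_sq_of_pow_four_eq_one {χ : MulChar R S} (hχ : χ ^ 4 = 1) (x : R) :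
    χ⁻¹ x ^ 2 = χ x ^ 2 := by
  rw [← MulChar.pow_apply' _ two_ne_zero, ← MulChar.pow_apply' _ two_ne_zero, inv_pow,
    inv_eq_of_mul_eq_one_right ((pow_add χ 2 2).symm.trans hχ)]

lemma sq_sq_eq_one_of_orderOf_eq_four {G : Type*} [Monoid G] {a : G} (ha : orderOf a = 4) :
    (a ^ 2) ^ 2 = 1 := by
  rw [← pow_mul, ← orderOf_dvd_iff_pow_eq_one, ha]

variable [IsDomain S]

lemma map_generator_eq_neg_one {g : Rˣ} (hg : ∀ u, u ∈ Subgroup.zpowers g) {χ : MulChar R S}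
    (hχ : χ ^ 2 = 1) (hχ1 : χ ≠ 1) : χ g = -1 := by
  refine (sq_eq_one_iff.mp (map_pow_eq_one_of_isUnit hχ g.isUnit)).resolve_left fun h => hχ1 ?_
  rw [MulChar.eq_iff hg, h, MulChar.one_apply_coe]

lemma map_generator_sq_eq_neg_one {g : Rˣ} (hg : ∀ u, u ∈ Subgroup.zpowers g)
    {χ : MulChar R S} (hχ : orderOf χ = 4) : χ g ^ 2 = -1 := by
  rw [← MulChar.pow_apply_coe]
  exact map_generator_eq_neg_one hg (sq_sq_eq_one_of_orderOf_eq_four hχ)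
    (pow_ne_one_of_lt_orderOf two_ne_zero (by lia))

lemma exists_ne_zero_map_sq_eq_neg_one [Finite K] {χ : MulChar K S} (hχ : orderOf χ = 4) :
    ∃ t ≠ 0, χ t ^ 2 = -1 := by
  obtain ⟨g, hg⟩ := IsCyclic.exists_generator (α := Kˣ)
  exact ⟨g, g.ne_zero, map_generator_sq_eq_neg_one hg hχ⟩

lemma eq_quadraticChar_of_sq_eq_one [Fintype K] [DecidableEq K] (hK : ringChar K ≠ 2)
    {χ : MulChar K S} (hχ : χ ^ 2 = 1) (hχ1 : χ ≠ 1) :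
    χ = (quadraticChar K).ringHomComp (Int.castRingHom S) := by
  obtain ⟨g, hg⟩ := IsCyclic.exists_generator (α := Kˣ)
  have quadraticChar_g : quadraticChar K g = -1 :=
    map_generator_eq_neg_one hg (quadraticChar_isQuadratic K).sq_eq_one (quadraticChar_ne_one hK)
  rw [MulChar.eq_iff hg, map_generator_eq_neg_one hg hχ hχ1, MulChar.ringHomComp_apply,
    quadraticChar_g, map_neg, map_one]

end CharacterValues

section JacobiDuplication

variable {K S : Type*} [Field K] [Fintype K] [CommRing S]

lemma sum_comp_sq [DecidableEq K] (hK : ringChar K ≠ 2) (f : K → S) :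
    ∑ x, f (x ^ 2) = ∑ t, (quadraticChar K t + 1) * f t := by
  rw [← sum_fiberwise' univ (fun x : K => x ^ 2) f]
  refine sum_congr rfl fun t _ => ?_
  have card_sqrts := quadraticChar_card_sqrts hK t
  rw [Set.toFinset_ofPred] at card_sqrts
  rw [sum_const, nsmul_eq_mul]
  congr 1
  exact_mod_cast congrArg (Int.cast : ℤ → S) card_sqrts

variable [IsDomain S]

lemma map_four_mul_jacobiSum_self [DecidableEq K] (hK : ringChar K ≠ 2) {χ : MulChar K S}
    (hχ : χ ≠ 1) :
    χ 4 * jacobiSum χ χ = jacobiSum χ ((quadraticChar K).ringHomComp (Int.castRingHom S)) := by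
  calc χ 4 * jacobiSum χ χ = ∑ x : K, χ (1 - (1 - 2 * x) ^ 2) := by
        rw [jacobiSum, mul_sum]
        refine sum_congr rfl fun x _ => ?_
        rw [← map_mul, ← map_mul]
        congr 1
        ring
    _ = ∑ y : K, χ (1 - y ^ 2) := by
        rw [← sum_comp_sub (fun y => χ (1 - y ^ 2)) 1]
        exact Equiv.sum_comp (Equiv.mulLeft₀ (2 : K) (Ring.two_ne_zero hK))
          fun x => χ (1 - (1 - x) ^ 2)
    _ = ∑ t : K, quadraticChar K t * χ (1 - t) + ∑ t : K, χ (1 - t) := by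
        rw [sum_comp_sq hK fun y => χ (1 - y), ← sum_add_distrib]
        exact sum_congr rfl fun t _ => by ring
    _ = jacobiSum χ ((quadraticChar K).ringHomComp (Int.castRingHom S)) := by
        rw [sum_comp_sub χ 1, MulChar.sum_eq_zero_of_ne_one hχ, add_zero, jacobiSum_comm]
        rfl

lemma jacobiSum_sq_eq_jacobiSum_self [CharZero S] (hK : ringChar K ≠ 2) {χ : MulChar K S}
    (hχ : orderOf χ = 4) (hχ4 : χ 4 = 1) : jacobiSum χ (χ ^ 2) = jacobiSum χ χ := by
  classical
  have hχ1 : χ ≠ 1 := fun h => by simp [h] at hχ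
  rw [eq_quadraticChar_of_sq_eq_one hK (sq_sq_eq_one_of_orderOf_eq_four hχ)
    (pow_ne_one_of_lt_orderOf two_ne_zero (by lia)), ← map_four_mul_jacobiSum_self hK hχ1, hχ4,
    one_mul]

end JacobiDuplication

section QuarticSign

variable {K : Type*} [Field K]

/-- The `±1`-valued combination of a quartic character `ψ` and its inverse which is `1` where `ψ`
takes the values `1` and `ω`, for a square root `ω` of `-1`. -/
noncomputable def quarticSign (ψ : MulChar K ℂ) (ω : ℂ) : K → ℂ :=
  ((1 - ω) / 2) • ⇑ψ + ((1 + ω) / 2) • ⇑ψ⁻¹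

variable {ψ : MulChar K ℂ} {ω : ℂ}

lemma quarticSign_apply (x : K) :
    quarticSign ψ ω x = (1 - ω) / 2 * ψ x + (1 + ω) / 2 * ψ⁻¹ x := rfl

variable [Fintype K]

lemma isBalancedSign_quarticSign [DecidableEq K] (hψ : orderOf ψ = 4) (heven : Function.Even ψ)
    (hω : ω ^ 2 = -1) : IsBalancedSign (quarticSign ψ ω) where
  even x := by rw [quarticSign_apply, quarticSign_apply, heven, inv_even heven]
  sq_eq x := by
    rw [← map_mul_inv_map ψ, quarticSign_apply]
    linear_combination
      (1 + ω) ^ 2 / 4 * inv_map_sq_of_pow_four_eq_one (hψ ▸ pow_orderOf_eq_one ψ) x +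
        (ψ x ^ 2 / 2 - ψ x * ψ⁻¹ x / 2) * hω
  sum_eq_zero := by
    have hψ1 : ψ ≠ 1 := fun h => by simp [h] at hψ
    simp only [quarticSign_apply, sum_add_distrib, ← mul_sum]
    rw [MulChar.sum_eq_zero_of_ne_one hψ1, MulChar.sum_eq_zero_of_ne_one (inv_ne_one.mpr hψ1),
      mul_zero, mul_zero, add_zero]

lemma sum_quarticSign_mul_quarticSign_sub (hψ : orderOf ψ = 4) (heven : Function.Even ψ)
    (hω : ω ^ 2 = -1) {d : K} (hd : d ≠ 0) :
    ∑ t, quarticSign ψ ω t * quarticSign ψ ω (d - t) =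
      -1 - ω * Complex.I * (jacobiSum ψ ψ).im * (ψ ^ 2) d := by
  classical
  have hψ1 : ψ ≠ 1 := fun h => by simp [h] at hψ
  have sub_star : jacobiSum ψ ψ - jacobiSum ψ⁻¹ ψ⁻¹ = 2 * Complex.I * (jacobiSum ψ ψ).im := by
    rw [← star_jacobiSum]
    apply Complex.ext <;> simp [← two_mul]
  have jacobiSum_inv : jacobiSum ψ ψ⁻¹ = -1 := by
    rw [jacobiSum_nontrivial_inv hψ1, heven, map_one]
  have inv_jacobiSum : jacobiSum ψ⁻¹ ψ = -1 := by rw [jacobiSum_comm, jacobiSum_inv]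
  have map_mul_inv : ψ d * ψ⁻¹ d = 1 := by rw [map_mul_inv_map, nonzeroInd_of_ne_zero hd]
  have sum_eq (A B : MulChar K ℂ) : ∑ t, A t * B (d - t) = A d * B d * jacobiSum A B :=
    sum_map_mul_map_sub A B (Units.mk0 d hd)
  calc _ = ((1 - ω) / 2) ^ 2 * ∑ t, ψ t * ψ (d - t) + ((1 + ω) / 2) ^ 2 * ∑ t, ψ⁻¹ t * ψ⁻¹ (d - t)
        + (1 - ω ^ 2) / 4 * (∑ t, ψ t * ψ⁻¹ (d - t) + ∑ t, ψ⁻¹ t * ψ (d - t)) := by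
        simp only [mul_sum, ← sum_add_distrib, quarticSign_apply]
        exact sum_congr rfl fun t _ => by ring
    _ = _ := by
        rw [sum_eq, sum_eq, sum_eq, sum_eq, jacobiSum_inv, inv_jacobiSum,
          MulChar.pow_apply' _ two_ne_zero]
        linear_combination
          ((1 + ω) / 2) ^ 2 * jacobiSum ψ⁻¹ ψ⁻¹ *
            inv_map_sq_of_pow_four_eq_one (hψ ▸ pow_orderOf_eq_one ψ) d -
          (1 - ω ^ 2) / 2 * map_mul_inv - ω / 2 * ψ d ^ 2 * sub_star +
          (ψ d ^ 2 * (jacobiSum ψ ψ + jacobiSum ψ⁻¹ ψ⁻¹) / 4 + 1 / 2) * hω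

lemma nonzeroInd_mul_sq_sum_quarticSign [DecidableEq K] (hψ : orderOf ψ = 4)
    (heven : Function.Even ψ) (hω : ω ^ 2 = -1) (d : K) :
    nonzeroInd d * (∑ t, quarticSign ψ ω t * quarticSign ψ ω (d - t)) ^ 2 =
      (1 + (jacobiSum ψ ψ).im ^ 2) * nonzeroInd d +
        2 * ω * Complex.I * (jacobiSum ψ ψ).im * (ψ ^ 2) d := by
  by_cases hd : d = 0
  · rw [hd, MulChar.map_zero, nonzeroInd_zero]
    ring
  have sq_sq : (ψ ^ 2) d ^ 2 = 1 := map_pow_eq_one_of_isUnit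
    (sq_sq_eq_one_of_orderOf_eq_four hψ) (isUnit_iff_ne_zero.mpr hd)
  rw [sum_quarticSign_mul_quarticSign_sub hψ heven hω hd, nonzeroInd_of_ne_zero hd]
  linear_combination ((jacobiSum ψ ψ).im : ℂ) ^ 2 * ω ^ 2 * Complex.I ^ 2 * sq_sq +
    ((jacobiSum ψ ψ).im : ℂ) ^ 2 * ω ^ 2 * Complex.I_sq - ((jacobiSum ψ ψ).im : ℂ) ^ 2 * hω

lemma edgeSum_fourCycle_quarticSign [DecidableEq K] (hψ : orderOf ψ = 4)
    (heven : Function.Even ψ) (hω : ω ^ 2 = -1) :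
    edgeSum nonzeroInd (quarticSign ψ ω) (quarticSign ψ ω) (quarticSign ψ ω) (quarticSign ψ ω)
      nonzeroInd =
      Fintype.card K * (Fintype.card K - 1) * (3 - Fintype.card K + (jacobiSum ψ ψ).im ^ 2) := by
  have hψ2 : ψ ^ 2 ≠ 1 := pow_ne_one_of_lt_orderOf two_ne_zero (by lia)
  rw [(isBalancedSign_quarticSign hψ heven hω).edgeSum_fourCycle]
  simp only [nonzeroInd_mul_sq_sum_quarticSign hψ heven hω, sum_add_distrib, ← mul_sum,
    sum_nonzeroInd, MulChar.sum_eq_zero_of_ne_one hψ2]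
  ring

lemma edgeSum_claw_eq_edgeSum_diamond (hψ : ψ ^ 4 = 1) (heven : Function.Even ψ) :
    edgeSum ψ ψ ⇑ψ⁻¹ ψ ⇑ψ⁻¹ ⇑ψ⁻¹ = edgeSum ⇑ψ⁻¹ ⇑ψ⁻¹ ψ ⇑ψ⁻¹ ⇑ψ⁻¹ ⇑ψ⁻¹ := by
  have hinv := inv_even heven
  have weight_xy : (ψ * ψ * ψ⁻¹)⁻¹ = ψ⁻¹ := by group
  have weight_xw : (ψ⁻¹ * ψ⁻¹ * ψ⁻¹)⁻¹ = ψ⁻¹ :=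
    calc (ψ⁻¹ * ψ⁻¹ * ψ⁻¹)⁻¹ = ψ ^ 4 * ψ⁻¹ := by group
      _ = ψ⁻¹ := by rw [hψ, one_mul]
  rw [edgeSum_inversion heven hinv hinv, weight_xy, weight_xw, edgeSum_swap_last hinv,
    edgeSum_swap_fst hinv]

lemma edgeSum_diamond (hψ : ψ ^ 4 = 1) (heven : Function.Even ψ) :
    edgeSum ⇑ψ⁻¹ ⇑ψ⁻¹ ψ ⇑ψ⁻¹ ⇑ψ⁻¹ ⇑ψ⁻¹ =
      Fintype.card K * (Fintype.card K - 1) * normalizedEdgeSum ψ⁻¹ ψ ψ⁻¹ ψ⁻¹ ψ⁻¹ := by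
  have hinv := inv_even heven
  refine edgeSum_eq_mul_normalizedEdgeSum hinv hinv hinv ?_
  calc ψ⁻¹ * ψ⁻¹ * ψ * ψ⁻¹ * ψ⁻¹ * ψ⁻¹ = (ψ ^ 4)⁻¹ := by group
    _ = 1 := by rw [hψ, inv_one]

/- The invariance of the weights under scaling leaves the terms with three or five edges of one
kind. Up to conjugation these are the normalised sums, except for the claw, which inversion turns
into the diamond. -/
lemma edgeSum_smul_add_smul_inv (hψ : orderOf ψ = 4) (heven : Function.Even ψ) (a b : ℂ) :
    edgeSum (a • ⇑ψ + b • ⇑ψ⁻¹) (a • ⇑ψ + b • ⇑ψ⁻¹) (a • ⇑ψ + b • ⇑ψ⁻¹)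
      (a • ⇑ψ + b • ⇑ψ⁻¹) (a • ⇑ψ + b • ⇑ψ⁻¹) (a • ⇑ψ + b • ⇑ψ⁻¹) =
      Fintype.card K * (Fintype.card K - 1) *
        ((6 * a * b ^ 5 + 4 * a ^ 3 * b ^ 3) * normalizedEdgeSum ψ⁻¹ ψ ψ⁻¹ ψ⁻¹ ψ⁻¹ +
          (6 * a ^ 5 * b + 4 * a ^ 3 * b ^ 3) * star (normalizedEdgeSum ψ⁻¹ ψ ψ⁻¹ ψ⁻¹ ψ⁻¹) +
          12 * a ^ 3 * b ^ 3 * normalizedEdgeSum ψ ψ ψ ψ⁻¹ ψ⁻¹) := by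
  have hψ4 : ψ ^ 4 = 1 := hψ ▸ pow_orderOf_eq_one ψ
  have hinv := inv_even heven
  have zero_empty : edgeSum ψ ψ ψ ψ ψ ψ = 0 :=
    edgeSum_eq_zero_of_mul_eq_zpow (ψ := ψ) (m := 6) (by simp [zpow_ofNat, pow_succ])
      (by rw [hψ]; decide)
  have zero_adjacent : edgeSum ⇑ψ⁻¹ ⇑ψ⁻¹ ψ ψ ψ ψ = 0 :=
    edgeSum_eq_zero_of_mul_eq_zpow (ψ := ψ) (m := 2) (by group) (by rw [hψ]; decide)
  have zero_opposite : edgeSum ψ ψ ⇑ψ⁻¹ ⇑ψ⁻¹ ψ ψ = 0 :=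
    edgeSum_eq_zero_of_mul_eq_zpow (ψ := ψ) (m := 2) (by simp [zpow_ofNat, pow_two])
      (by rw [hψ]; decide)
  have zero_fourCycle : edgeSum ψ ⇑ψ⁻¹ ⇑ψ⁻¹ ⇑ψ⁻¹ ⇑ψ⁻¹ ψ = 0 :=
    edgeSum_eq_zero_of_mul_eq_zpow (ψ := ψ) (m := -2) (by group) (by rw [hψ]; decide)
  have zero_paw : edgeSum ⇑ψ⁻¹ ⇑ψ⁻¹ ⇑ψ⁻¹ ⇑ψ⁻¹ ψ ψ = 0 :=
    edgeSum_eq_zero_of_mul_eq_zpow (ψ := ψ) (m := -2) (by group) (by rw [hψ]; decide)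
  have zero_complete : edgeSum ⇑ψ⁻¹ ⇑ψ⁻¹ ⇑ψ⁻¹ ⇑ψ⁻¹ ⇑ψ⁻¹ ⇑ψ⁻¹ = 0 :=
    edgeSum_eq_zero_of_mul_eq_zpow (ψ := ψ) (m := -6) (by group) (by rw [hψ]; decide)
  have path : edgeSum ⇑ψ⁻¹ ψ ψ ψ ⇑ψ⁻¹ ⇑ψ⁻¹ =
      Fintype.card K * (Fintype.card K - 1) * normalizedEdgeSum ψ ψ ψ ψ⁻¹ ψ⁻¹ :=
    edgeSum_eq_mul_normalizedEdgeSum heven hinv hinv (by group)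
  have star_diamond : edgeSum ψ ψ ⇑ψ⁻¹ ψ ψ ψ =
      star (edgeSum ⇑ψ⁻¹ ⇑ψ⁻¹ ψ ⇑ψ⁻¹ ⇑ψ⁻¹ ⇑ψ⁻¹) := by
    rw [star_edgeSum, inv_inv]
  have star_claw : edgeSum ⇑ψ⁻¹ ⇑ψ⁻¹ ψ ⇑ψ⁻¹ ψ ψ = star (edgeSum ψ ψ ⇑ψ⁻¹ ψ ⇑ψ⁻¹ ⇑ψ⁻¹) := by
    rw [star_edgeSum, inv_inv]
  rw [edgeSum_add (heven.const_smul a) (hinv.const_smul b)]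
  simp only [edgeSum_smul]
  rw [star_claw, edgeSum_claw_eq_edgeSum_diamond hψ4 heven, star_diamond, edgeSum_diamond hψ4 heven,
    path, zero_empty, zero_adjacent, zero_opposite, zero_fourCycle, zero_paw, zero_complete]
  simp only [star_mul', star_sub, star_natCast, star_one]
  ring

lemma edgeSum_quarticSign (hψ : orderOf ψ = 4) (heven : Function.Even ψ) (hω : ω ^ 2 = -1) :
    edgeSum (quarticSign ψ ω) (quarticSign ψ ω) (quarticSign ψ ω) (quarticSign ψ ω)
      (quarticSign ψ ω) (quarticSign ψ ω) =
      Fintype.card K * (Fintype.card K - 1) / 2 *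
        (3 * normalizedEdgeSum ψ ψ ψ ψ⁻¹ ψ⁻¹ -
          (normalizedEdgeSum ψ⁻¹ ψ ψ⁻¹ ψ⁻¹ ψ⁻¹).re) := by
  rw [quarticSign, edgeSum_smul_add_smul_inv hψ heven]
  set V := normalizedEdgeSum ψ⁻¹ ψ ψ⁻¹ ψ⁻¹ ψ⁻¹
  have add_star : V + star V = 2 * V.re := by simpa using Complex.add_conj V
  set a := (1 - ω) / 2
  set b := (1 + ω) / 2
  have ab : a * b = 1 / 2 := by linear_combination -hω / 4
  have a_pow_four : a ^ 4 = -1 / 4 := by linear_combination (ω ^ 2 - 4 * ω + 5) / 16 * hω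
  have b_pow_four : b ^ 4 = -1 / 4 := by linear_combination (ω ^ 2 + 4 * ω + 5) / 16 * hω
  have a_cube_b_cube : a ^ 3 * b ^ 3 = 1 / 8 := by rw [← mul_pow, ab]; norm_num
  have a_pow_five_b : a ^ 5 * b = -1 / 8 := by linear_combination a * b * a_pow_four - ab / 4
  have a_b_pow_five : a * b ^ 5 = -1 / 8 := by linear_combination a * b * b_pow_four - ab / 4
  linear_combination (Fintype.card K * (Fintype.card K - 1) : ℂ) *
    (6 * star V * a_pow_five_b + 6 * V * a_b_pow_five +
      (4 * V + 4 * star V + 12 * normalizedEdgeSum ψ ψ ψ ψ⁻¹ ψ⁻¹) * a_cube_b_cube - add_star / 4)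

lemma edgeSum_nonzeroInd_add_quarticSign [DecidableEq K] (hψ : orderOf ψ = 4)
    (heven : Function.Even ψ) (hω : ω ^ 2 = -1) {f : K → ℂ}
    (hf : f = nonzeroInd + quarticSign ψ ω) :
    edgeSum f f f f f f = Fintype.card K * (Fintype.card K - 1) / 2 *
      (2 * (Fintype.card K ^ 2 - 20 * Fintype.card K + 81) + 6 * (jacobiSum ψ ψ).im ^ 2 -
        (normalizedEdgeSum ψ⁻¹ ψ ψ⁻¹ ψ⁻¹ ψ⁻¹).re + 3 * normalizedEdgeSum ψ ψ ψ ψ⁻¹ ψ⁻¹) := by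
  obtain ⟨t, ht, hψt⟩ := exists_ne_zero_map_sq_eq_neg_one hψ
  set s := quarticSign ψ ω
  have hs : IsBalancedSign s := isBalancedSign_quarticSign hψ heven hω
  have hT := mulLeft_bijective₀ (t ^ 2) (pow_ne_zero 2 ht)
  have ind_scaling : (nonzeroInd : K → ℂ) ∘ AddMonoidHom.mulLeft (t ^ 2) = (1 : ℂ) • nonzeroInd :=
    funext fun x => by simp [nonzeroInd, ht]
  have sign_scaling : s ∘ AddMonoidHom.mulLeft (t ^ 2) = (-1 : ℂ) • s := funext fun x => by
    simp only [Function.comp_apply, AddMonoidHom.coe_mulLeft, Pi.smul_apply, s, quarticSign_apply,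
      map_mul, map_pow, inv_map_sq_of_pow_four_eq_one (hψ ▸ pow_orderOf_eq_one ψ), hψt,
      smul_eq_mul]
    ring
  have odd₁ : edgeSum nonzeroInd nonzeroInd s nonzeroInd nonzeroInd nonzeroInd = 0 :=
    edgeSum_eq_zero_of_scaling hT ind_scaling ind_scaling sign_scaling ind_scaling ind_scaling
      ind_scaling (by norm_num)
  have odd_claw : edgeSum nonzeroInd nonzeroInd s nonzeroInd s s = 0 :=
    edgeSum_eq_zero_of_scaling hT ind_scaling ind_scaling sign_scaling ind_scaling sign_scaling
      sign_scaling (by norm_num)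
  have odd_triangle : edgeSum s s nonzeroInd s nonzeroInd nonzeroInd = 0 :=
    edgeSum_eq_zero_of_scaling hT sign_scaling sign_scaling ind_scaling sign_scaling ind_scaling
      ind_scaling (by norm_num)
  have odd_path : edgeSum s nonzeroInd nonzeroInd nonzeroInd s s = 0 :=
    edgeSum_eq_zero_of_scaling hT sign_scaling ind_scaling ind_scaling ind_scaling sign_scaling
      sign_scaling (by norm_num)
  have odd₅ : edgeSum s s nonzeroInd s s s = 0 :=
    edgeSum_eq_zero_of_scaling hT sign_scaling sign_scaling ind_scaling sign_scaling sign_scaling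
      sign_scaling (by norm_num)
  rw [hf, edgeSum_add nonzeroInd_even hs.even, odd₁, odd_claw, odd_triangle, odd_path, odd₅,
    edgeSum_nonzeroInd, hs.edgeSum_adjacent, hs.edgeSum_opposite,
    edgeSum_fourCycle_quarticSign hψ heven hω, hs.edgeSum_paw, edgeSum_quarticSign hψ heven hω]
  ring

end QuarticSign

section QuarticIndicator

/-- The indicator function of the set where `ψ` takes the value `1` or `ω`. For `ψ` of order four
and `ω` its value at a generator `g`, this is the connection set of the Peisert-like graph. -/
noncomputable def quarticInd {R : Type*} [CommMonoid R] (ψ : MulChar R ℂ) (ω : ℂ) (x : R) : ℂ :=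
  open Classical in if ψ x = 1 ∨ ψ x = ω then 1 else 0

variable {K : Type*} [Field K] {ψ : MulChar K ℂ} {ω : ℂ}

lemma nonzeroInd_add_quarticSign [DecidableEq K] (hψ : ψ ^ 4 = 1) (hω : ω ^ 2 = -1) :
    nonzeroInd + quarticSign ψ ω = (2 : ℂ) • quarticInd ψ ω := by
  funext x
  simp only [Pi.add_apply, Pi.smul_apply, smul_eq_mul]
  by_cases hx : x = 0
  · have hω0 : (0 : ℂ) ≠ ω := by
      rintro rfl
      norm_num at hω
    simp [hx, nonzeroInd_zero, quarticSign_apply, quarticInd, MulChar.map_zero, hω0]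
  have pow_four : ψ x ^ 4 = 1 := map_pow_eq_one_of_isUnit hψ (isUnit_iff_ne_zero.mpr hx)
  have map_mul_inv : ψ x * ψ⁻¹ x = 1 := by rw [map_mul_inv_map, nonzeroInd_of_ne_zero hx]
  have map_inv : ψ⁻¹ x = ψ x ^ 3 := by
    linear_combination ψ x ^ 3 * map_mul_inv - ψ⁻¹ x * pow_four
  have roots : ψ x = 1 ∨ ψ x = ω ∨ ψ x = -1 ∨ ψ x = -ω := by
    have : (ψ x - 1) * ((ψ x - ω) * ((ψ x + 1) * (ψ x + ω))) = 0 := by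
      linear_combination pow_four + (1 - ψ x ^ 2) * hω
    simpa only [mul_eq_zero, sub_eq_zero, add_eq_zero_iff_eq_neg] using this
  rw [nonzeroInd_of_ne_zero hx, quarticSign_apply, map_inv, quarticInd]
  rcases roots with h | h | h | h
  · rw [if_pos (Or.inl h), h]
    ring
  · rw [if_pos (Or.inr h), h]
    linear_combination (ω ^ 2 + ω - 2) / 2 * hω
  · rw [if_neg (by grind), h]
    ring
  · rw [if_neg (by grind), h]
    linear_combination (-ω ^ 2 - ω + 2) / 2 * hω

lemma edgeSum_quarticInd [Fintype K] (hψ : orderOf ψ = 4) (heven : Function.Even ψ)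
    (hω : ω ^ 2 = -1) :
    edgeSum (quarticInd ψ ω) (quarticInd ψ ω) (quarticInd ψ ω) (quarticInd ψ ω) (quarticInd ψ ω)
      (quarticInd ψ ω) = Fintype.card K * (Fintype.card K - 1) / 128 *
        (2 * (Fintype.card K ^ 2 - 20 * Fintype.card K + 81) + 6 * (jacobiSum ψ ψ).im ^ 2 -
          (normalizedEdgeSum ψ⁻¹ ψ ψ⁻¹ ψ⁻¹ ψ⁻¹).re + 3 * normalizedEdgeSum ψ ψ ψ ψ⁻¹ ψ⁻¹) := by
  classical
  have doubled := edgeSum_nonzeroInd_add_quarticSign hψ heven hω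
    (nonzeroInd_add_quarticSign (hψ ▸ pow_orderOf_eq_one ψ) hω).symm
  rw [edgeSum_smul] at doubled
  linear_combination doubled / 64

end QuarticIndicator

section Hypergeometric

lemma conjChar_eq_inv {q : ℕ} (A : DirichletCharacter ℂ q) : conjChar A = A⁻¹ := by
  rw [← MulChar.star_eq_inv]
  rfl

lemma sum_map_mul_ite {R S : Type*} [CommRing R] [Fintype R] [DecidableEq R] [CommRing S]
    (A : MulChar R S) (c : R) {d : R} (hd : IsUnit d) :
    ∑ x, A x * (if d = x * c then 1 else 0) = A d * A⁻¹ c := by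
  by_cases hc : IsUnit c
  · obtain ⟨u, rfl⟩ := hc
    simp only [← Units.mul_inv_eq_iff_eq_mul, mul_ite, mul_one, mul_zero, sum_ite_eq, mem_univ,
      if_true, map_mul, MulChar.inv_apply, Ring.inverse_unit]
  · rw [MulChar.map_nonunit _ hc, mul_zero]
    refine sum_eq_zero fun x _ => ?_
    rw [if_neg fun h => hc (isUnit_of_mul_isUnit_right (h ▸ hd)), mul_zero]

variable {q : ℕ} [NeZero q]

lemma sum_map_mul_inv_map {a b : ZMod q} (ha : IsUnit a) :
    ∑ χ : DirichletCharacter ℂ q, χ a * χ⁻¹ b = if a = b then (q.totient : ℂ) else 0 := by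
  rw [← DirichletCharacter.sum_char_inv_mul_char_eq ℂ ha]
  obtain ⟨u, rfl⟩ := ha
  refine Fintype.sum_equiv (Equiv.inv _) _ _ fun χ => ?_
  rw [Equiv.inv_apply, MulChar.inv_apply, MulChar.inv_apply, ZMod.inv_coe_unit,
    Ring.inverse_unit, inv_inv]

lemma sum_sum_map_mul_inv_map (A : DirichletCharacter ℂ q) {y z : ZMod q} (hy : IsUnit y)
    (hz : IsUnit z) (hy1 : IsUnit (1 - y)) (hz1 : IsUnit (1 - z)) :
    ∑ χ : DirichletCharacter ℂ q, ∑ x,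
        A x * (χ (-(x * y * z)) * χ⁻¹ ((1 - x) * (1 - y) * (1 - z))) =
      q.totient * (A (-((1 - y) * (1 - z))) * A⁻¹ (y + z - 1)) := by
  rw [← sum_map_mul_ite A (y + z - 1) (hy1.mul hz1).neg, sum_comm, mul_sum]
  refine sum_congr rfl fun x _ => ?_
  by_cases hx : IsUnit x
  · have solve : -(x * y * z) = (1 - x) * (1 - y) * (1 - z) ↔
        -((1 - y) * (1 - z)) = x * (y + z - 1) := by grind
    simp only [← mul_sum, sum_map_mul_inv_map ((hx.mul hy).mul hz).neg, solve]
    split_ifs <;> ring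
  · simp [MulChar.map_nonunit A hx]

lemma dBinom_mul_dBinom_mul_dBinom (A B C D E χ : DirichletCharacter ℂ q) :
    dBinom (A * χ) χ * dBinom (B * χ) (D * χ) * dBinom (C * χ) (E * χ) =
      D (-1) * E (-1) / q ^ 3 * ∑ y, ∑ z, B y * C z * D⁻¹ (1 - y) * E⁻¹ (1 - z) *
        ∑ x, A x * (χ (-(x * y * z)) * χ⁻¹ ((1 - x) * (1 - y) * (1 - z))) := by
  have sq_neg_one : χ (-1) * χ (-1) = 1 := by
    rw [← map_mul, neg_one_mul, neg_neg, map_one]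
  have product : ∑ y, ∑ z, B y * C z * D⁻¹ (1 - y) * E⁻¹ (1 - z) *
        ∑ x, A x * (χ (-(x * y * z)) * χ⁻¹ ((1 - x) * (1 - y) * (1 - z))) =
      χ (-1) * (jacobiSum (B * χ) (D * χ)⁻¹ * (jacobiSum (C * χ) (E * χ)⁻¹ *
        jacobiSum (A * χ) χ⁻¹)) := by
    rw [jacobiSum, jacobiSum, jacobiSum, sum_mul, mul_sum]
    refine sum_congr rfl fun y _ => ?_
    rw [sum_mul, mul_sum, mul_sum]
    refine sum_congr rfl fun z _ => ?_
    rw [mul_sum, mul_sum, mul_sum, mul_sum]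
    refine sum_congr rfl fun x _ => ?_
    rw [← neg_one_mul]
    simp only [map_mul, MulChar.mul_apply, mul_inv]
    ring
  rw [product]
  simp only [dBinom, conjChar_eq_inv, MulChar.mul_apply]
  linear_combination (D (-1) * E (-1) / q ^ 3) * χ (-1) * (jacobiSum (B * χ) (D * χ)⁻¹ *
    (jacobiSum (C * χ) (E * χ)⁻¹ * jacobiSum (A * χ) χ⁻¹)) * sq_neg_one

lemma sum_dBinom_mul_dBinom_mul_dBinom (A B C D E : DirichletCharacter ℂ q) :
    ∑ χ : DirichletCharacter ℂ q, dBinom (A * χ) χ * dBinom (B * χ) (D * χ) *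
        dBinom (C * χ) (E * χ) =
      D (-1) * E (-1) / q ^ 3 * q.totient * ∑ y, ∑ z, B y * C z * D⁻¹ (1 - y) * E⁻¹ (1 - z) *
        (A (-((1 - y) * (1 - z))) * A⁻¹ (y + z - 1)) := by
  simp only [dBinom_mul_dBinom_mul_dBinom, ← mul_sum]
  rw [mul_assoc, sum_comm, mul_sum univ _ (q.totient : ℂ)]
  congr 1
  refine sum_congr rfl fun y _ => ?_
  rw [sum_comm, mul_sum]
  refine sum_congr rfl fun z _ => ?_
  rw [← mul_sum, mul_left_comm]
  by_cases hy : IsUnit y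
  swap; · simp [MulChar.map_nonunit _ hy]
  by_cases hz : IsUnit z
  swap; · simp [MulChar.map_nonunit _ hz]
  by_cases hy1 : IsUnit (1 - y)
  swap; · simp [MulChar.map_nonunit _ hy1]
  by_cases hz1 : IsUnit (1 - z)
  swap; · simp [MulChar.map_nonunit _ hz1]
  rw [sum_sum_map_mul_inv_map A hy hz hy1 hz1]

lemma sq_mul_threeF₂_one (A B C D E : DirichletCharacter ℂ q) :
    (q : ℂ) ^ 2 * threeF₂ A B C D E 1 =
      A (-1) * D (-1) * E (-1) * normalizedEdgeSum B (A * E⁻¹) (A * D⁻¹) C A⁻¹ := by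
  have hq : (q : ℂ) ≠ 0 := NeZero.ne _
  have htot : (q.totient : ℂ) ≠ 0 := Nat.cast_ne_zero.mpr (Nat.totient_pos.mpr (NeZero.pos q)).ne'
  have reflect : ∑ y, ∑ z, B y * C z * D⁻¹ (1 - y) * E⁻¹ (1 - z) *
        (A (-((1 - y) * (1 - z))) * A⁻¹ (y + z - 1)) =
      A (-1) * normalizedEdgeSum B (A * E⁻¹) (A * D⁻¹) C A⁻¹ := by
    simp only [normalizedEdgeSum, mul_sum]
    refine sum_congr rfl fun y _ => ?_
    rw [← sum_comp_sub _ 1]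
    refine sum_congr rfl fun c _ => ?_
    rw [sub_sub_cancel, show y + (1 - c) - 1 = y - c by ring, ← neg_one_mul]
    simp only [map_mul, MulChar.mul_apply]
    ring
  simp only [threeF₂, map_one, mul_one]
  rw [finsum_eq_sum_of_fintype, sum_dBinom_mul_dBinom_mul_dBinom, reflect]
  field_simp

lemma sq_mul_threeF₂_conj_conj_sq_one {χ : DirichletCharacter ℂ q}
    (hχ : χ (-1) = 1) :
    (q : ℂ) ^ 2 * threeF₂ χ (conjChar χ) (conjChar χ) (χ ^ 2) 1 1 =
      normalizedEdgeSum χ⁻¹ χ χ⁻¹ χ⁻¹ χ⁻¹ := by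
  have χ_mul_inv_sq : χ * (χ ^ 2)⁻¹ = χ⁻¹ := by group
  rw [sq_mul_threeF₂_one, conjChar_eq_inv, χ_mul_inv_sq, inv_one, mul_one,
    MulChar.pow_apply' _ two_ne_zero, hχ, one_pow, MulChar.one_apply isUnit_one.neg, mul_one,
    mul_one, one_mul]

lemma sq_mul_threeF₂_self_conj_one {χ : DirichletCharacter ℂ q}
    (hχ : χ (-1) = 1) :
    (q : ℂ) ^ 2 * threeF₂ χ χ (conjChar χ) 1 1 1 = normalizedEdgeSum χ χ χ χ⁻¹ χ⁻¹ := by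
  rw [sq_mul_threeF₂_one, conjChar_eq_inv, inv_one, mul_one, hχ,
    MulChar.one_apply isUnit_one.neg, mul_one, mul_one, one_mul]

end Hypergeometric

section ChangeLevel

open DirichletCharacter

variable {p k : ℕ} (hpq : p ∣ p ^ (k + 1))

lemma pow_prime_pow_eq_one_of_castHom_eq_one {x : ZMod (p ^ (k + 1))}
    (hx : ZMod.castHom hpq (ZMod p) x = 1) : x ^ p ^ k = 1 := by
  obtain ⟨m, rfl⟩ := ZMod.intCast_surjective x
  rw [map_intCast, ← Int.cast_one, ZMod.intCast_eq_intCast_iff_dvd_sub, dvd_sub_comm] at hx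
  have cast_dvd : (p : ZMod (p ^ (k + 1))) ∣ (m : ZMod (p ^ (k + 1))) - 1 := by
    exact_mod_cast Int.cast_dvd_cast (α := ZMod (p ^ (k + 1))) _ _ hx
  have pow_dvd := dvd_sub_pow_of_dvd_sub cast_dvd k
  rw [one_pow, ← Nat.cast_pow, ZMod.natCast_self, zero_dvd_iff] at pow_dvd
  exact sub_eq_zero.mp pow_dvd

variable [NeZero p]

lemma isUnit_castHom_iff (x : ZMod (p ^ (k + 1))) :
    IsUnit (ZMod.castHom hpq (ZMod p) x) ↔ IsUnit x := by
  obtain ⟨n, rfl⟩ := ZMod.natCast_zmod_surjective x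
  rw [map_natCast, ZMod.isUnit_iff_coprime, ZMod.isUnit_iff_coprime,
    Nat.coprime_pow_right_iff k.succ_pos]

lemma changeLevel_apply_castHom (ψ : DirichletCharacter ℂ p) (x : ZMod (p ^ (k + 1))) :
    changeLevel hpq ψ x = ψ (ZMod.castHom hpq (ZMod p) x) := by
  by_cases hx : IsUnit x
  · obtain ⟨u, rfl⟩ := hx
    rw [changeLevel_eq_cast_of_dvd]
    rfl
  · rw [MulChar.map_nonunit _ hx, ψ.map_nonunit ((isUnit_castHom_iff hpq x).not.mpr hx)]

lemma exists_changeLevel_eq_of_pow_eq_one {χ : DirichletCharacter ℂ (p ^ (k + 1))} {m : ℕ}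
    (hχ : χ ^ m = 1) (hpm : p.Coprime m) :
    ∃ ψ : DirichletCharacter ℂ p, changeLevel hpq ψ = χ := by
  have factorsThrough : χ.FactorsThrough p := by
    rw [factorsThrough_iff_ker_unitsMap hpq]
    intro u hu
    have castHom_u : ZMod.castHom hpq (ZMod p) u = 1 :=
      (ZMod.unitsMap_val hpq u).symm.trans (congrArg Units.val hu)
    rw [MonoidHom.mem_ker]
    ext
    rw [MulChar.coe_toUnitHom, Units.val_one]
    refine (pow_eq_one_iff_of_coprime (hpm.pow_left k)).mp
      ⟨?_, map_pow_eq_one_of_isUnit hχ u.isUnit⟩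
    rw [← map_pow, pow_prime_pow_eq_one_of_castHom_eq_one hpq castHom_u, map_one]
  obtain ⟨_, ψ, hψ⟩ := factorsThrough
  exact ⟨ψ, hψ.symm⟩

lemma exists_orderOf_eq_four_changeLevel_eq (hp : Odd p)
    {χ : DirichletCharacter ℂ (p ^ (k + 1))} (hχ : orderOf χ = 4) :
    ∃ ψ : DirichletCharacter ℂ p, orderOf ψ = 4 ∧ changeLevel hpq ψ = χ := by
  have coprime_four : p.Coprime 4 := (Nat.coprime_two_right.mpr hp).pow_right 2
  obtain ⟨ψ, rfl⟩ :=
    exists_changeLevel_eq_of_pow_eq_one hpq (hχ ▸ pow_orderOf_eq_one χ) coprime_four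
  exact ⟨ψ, by rwa [orderOf_injective _ (changeLevel_injective hpq)] at hχ, rfl⟩

lemma card_ker_castHom :
    Nat.card (ZMod.castHom hpq (ZMod p)).toAddMonoidHom.ker = p ^ k := by
  have card_eq := card_eq_card_ker_mul_card
    (π := (ZMod.castHom hpq (ZMod p)).toAddMonoidHom) (ZMod.castHom_surjective hpq)
  rw [ZMod.card, ZMod.card] at card_eq
  exact Nat.eq_of_mul_eq_mul_right (NeZero.pos p) (card_eq.symm.trans (pow_succ p k))

lemma sum_comp_castHom (f : ZMod p → ℂ) :
    ∑ x, f (ZMod.castHom hpq (ZMod p) x) = (p : ℂ) ^ k * ∑ y, f y := by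
  rw [← Nat.cast_pow, ← card_ker_castHom hpq]
  exact sum_comp_of_surjective (π := (ZMod.castHom hpq (ZMod p)).toAddMonoidHom)
    (ZMod.castHom_surjective hpq) f

lemma jacobiSum_changeLevel (A B : DirichletCharacter ℂ p) :
    jacobiSum (changeLevel hpq A) (changeLevel hpq B) = (p : ℂ) ^ k * jacobiSum A B := by
  simp only [jacobiSum, changeLevel_apply_castHom, map_sub, map_one]
  exact sum_comp_castHom hpq fun x => A x * B (1 - x)

lemma normalizedEdgeSum_changeLevel (B C D E F : DirichletCharacter ℂ p) :
    normalizedEdgeSum (changeLevel hpq B) (changeLevel hpq C) (changeLevel hpq D)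
        (changeLevel hpq E) (changeLevel hpq F) =
      (p : ℂ) ^ (2 * k) * normalizedEdgeSum B C D E F := by
  simp only [normalizedEdgeSum, changeLevel_apply_castHom, map_sub, map_one]
  have sum_c (b) := sum_comp_castHom hpq fun c => B b * C c * D (1 - b) * E (1 - c) * F (b - c)
  have sum_b := sum_comp_castHom hpq fun b =>
    ∑ c, B b * C c * D (1 - b) * E (1 - c) * F (b - c)
  simp only [sum_c, ← mul_sum, sum_b]
  ring

lemma quarticInd_changeLevel (ψ : DirichletCharacter ℂ p) (ω : ℂ) :
    quarticInd (changeLevel hpq ψ) ω = quarticInd ψ ω ∘ ZMod.castHom hpq (ZMod p) := by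
  funext x
  simp only [quarticInd, changeLevel_apply_castHom, Function.comp_apply]

lemma edgeSum_comp_castHom (A B C D E F : ZMod p → ℂ) :
    edgeSum (A ∘ ZMod.castHom hpq (ZMod p)) (B ∘ ZMod.castHom hpq (ZMod p))
        (C ∘ ZMod.castHom hpq (ZMod p)) (D ∘ ZMod.castHom hpq (ZMod p))
        (E ∘ ZMod.castHom hpq (ZMod p)) (F ∘ ZMod.castHom hpq (ZMod p)) =
      (p : ℂ) ^ (4 * k) * edgeSum A B C D E F := by
  rw [mul_comm 4 k, pow_mul, ← Nat.cast_pow, ← card_ker_castHom hpq]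
  exact edgeSum_comp_of_surjective (π := (ZMod.castHom hpq (ZMod p)).toAddMonoidHom)
    (ZMod.castHom_surjective hpq) A B C D E F

end ChangeLevel

section Cliques

lemma card_filter_image_univ_eq {ι V : Type*} [Fintype ι] [DecidableEq ι] [Fintype V]
    [DecidableEq V] {s : Finset V} (hs : #s = Fintype.card ι) :
    #{t : ι → V | univ.image t = s} = (Fintype.card ι).factorial := by
  have equiv : ι ≃ s := Fintype.equivOfCardEq (by rw [Fintype.card_coe, hs])
  rw [← Fintype.card_equiv equiv, ← card_univ]
  symm
  refine card_bij (fun e _ i => (e i : V)) (fun e _ => ?_) (fun e _ e' _ h => ?_) fun t ht => ?_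
  · rw [mem_filter_univ]
    ext v
    simp only [mem_image, mem_univ, true_and]
    exact ⟨fun ⟨i, hi⟩ => hi ▸ (e i).2, fun hv => ⟨e.symm ⟨v, hv⟩, by simp⟩⟩
  · exact Equiv.ext fun i => Subtype.ext (congrFun h i)
  · rw [mem_filter_univ] at ht
    have t_injective : Function.Injective t := by
      rw [← Set.injOn_univ, ← coe_univ, ← card_image_iff, ht, hs, card_univ]
    let e : ι → s := fun i => ⟨t i, ht ▸ mem_image_of_mem t (mem_univ i)⟩
    have e_injective : Function.Injective e := fun i j h =>
      t_injective (congrArg Subtype.val h)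
    have e_bijective : Function.Bijective e :=
      (Fintype.bijective_iff_injective_and_card e).mpr
        ⟨e_injective, by rw [Fintype.card_coe, hs]⟩
    exact ⟨Equiv.ofBijective e e_bijective, mem_univ _, rfl⟩

variable {ι V : Type*} [Fintype ι] [DecidableEq V] (G : SimpleGraph V)

lemma pairwise_adj_iff_isNClique_image (t : ι → V) :
    (Pairwise fun i j => G.Adj (t i) (t j)) ↔ G.IsNClique (Fintype.card ι) (univ.image t) := by
  rw [SimpleGraph.isNClique_iff]
  constructor
  · intro adj
    have t_injective : Function.Injective t := fun i j hij => by
      by_contra hne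
      exact G.ne_of_adj (adj hne) hij
    refine ⟨?_, card_image_of_injective _ t_injective⟩
    rw [coe_image, coe_univ, Set.image_univ]
    rintro _ ⟨i, rfl⟩ _ ⟨j, rfl⟩ hij
    exact adj fun h => hij (congrArg t h)
  · rintro ⟨isClique, card_image⟩ i j hij
    have t_injOn := card_image_iff.mp (card_image.trans card_univ.symm)
    exact isClique (mem_image_of_mem t (mem_univ i)) (mem_image_of_mem t (mem_univ j))
      fun h => hij (t_injOn (mem_univ i) (mem_univ j) h)

lemma factorial_mul_card_cliqueFinset [DecidableEq ι] [Fintype V] [DecidableRel G.Adj]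
    [DecidablePred fun t : ι → V => Pairwise fun i j => G.Adj (t i) (t j)] :
    (Fintype.card ι).factorial * #(G.cliqueFinset (Fintype.card ι)) =
      #{t : ι → V | Pairwise fun i j => G.Adj (t i) (t j)} := by
  simp only [pairwise_adj_iff_isNClique_image]
  rw [card_eq_sum_card_fiberwise (f := fun t : ι → V => univ.image t)
    (t := G.cliqueFinset (Fintype.card ι)) fun t ht => by simpa using ht, mul_comm]
  refine (sum_const_nat fun s hs => ?_).symm
  rw [SimpleGraph.mem_cliqueFinset_iff] at hs
  rw [← card_filter_image_univ_eq hs.card_eq, filter_filter]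
  congr 1
  refine filter_congr fun t _ => and_iff_right_of_imp ?_
  rintro rfl
  exact hs

end Cliques

section FourCliques

variable {V S : Type*} [Fintype V]

lemma sum_fin_succ_fun [AddCommMonoid S] (n : ℕ) (f : (Fin (n + 1) → V) → S) :
    ∑ t, f t = ∑ x, ∑ t : Fin n → V, f (Fin.cons x t) := by
  rw [← Equiv.sum_comp (Fin.consEquiv fun _ => V), Fintype.sum_prod_type]
  rfl

lemma card_cliqueFinset_four [AddCommGroup V] [DecidableEq V] [CommRing S] (G : SimpleGraph V)
    [DecidableRel G.Adj] {h : V → S} (hG : ∀ x y, h (x - y) = if G.Adj x y then 1 else 0) :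
    24 * (#(G.cliqueFinset 4) : S) = edgeSum h h h h h h := by
  classical
  have indicator (t : Fin 4 → V) : (if Pairwise fun i j => G.Adj (t i) (t j) then (1 : S) else 0) =
      h (t 0 - t 1) * h (t 0 - t 2) * h (t 0 - t 3) * h (t 1 - t 2) * h (t 1 - t 3) *
        h (t 2 - t 3) := by
    simp only [hG, ← ite_and, mul_ite, mul_one, mul_zero]
    refine if_congr ?_ rfl rfl
    simp only [Pairwise, Fin.forall_fin_succ, IsEmpty.forall_iff, and_true]
    grind [G.adj_comm, G.irrefl]
  have factorial_mul := factorial_mul_card_cliqueFinset (ι := Fin 4) G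
  rw [Fintype.card_fin, show Nat.factorial 4 = 24 from rfl] at factorial_mul
  calc 24 * (#(G.cliqueFinset 4) : S)
      = ∑ t : Fin 4 → V, if Pairwise fun i j => G.Adj (t i) (t j) then 1 else 0 := by
        rw [sum_boole, ← factorial_mul]
        push_cast
        rfl
    _ = edgeSum h h h h h h := by
        simp only [indicator, sum_fin_succ_fun, edgeSum]
        refine sum_congr rfl fun x _ => sum_congr rfl fun y _ => sum_congr rfl fun z _ =>
          sum_congr rfl fun w _ => ?_
        rw [Fintype.sum_unique]
        rfl

end FourCliques

section PeisertGraph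

lemma map_unit_eq_one_iff_exists_zpow {R S : Type*} [CommMonoid R] [CommMonoidWithZero S] {g : Rˣ}
    (hg : ∀ u, u ∈ Subgroup.zpowers g) (χ : MulChar R S) (u : Rˣ) :
    χ u = 1 ↔ ∃ k : ℤ, u = g ^ (orderOf χ * k) := by
  have orderOf_map_g : orderOf (χ.toUnitHom g) = orderOf χ := by
    refine orderOf_eq_orderOf_iff.mpr fun n => ?_
    rw [MulChar.eq_iff hg, MulChar.pow_apply_coe, MulChar.one_apply_coe, Units.ext_iff,
      Units.val_pow_eq_pow_val, MulChar.coe_toUnitHom, Units.val_one]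
  rw [← MulChar.coe_toUnitHom, Units.val_eq_one]
  constructor
  · intro map_u
    obtain ⟨m, rfl⟩ := Subgroup.mem_zpowers_iff.mp (hg u)
    rw [map_zpow, ← orderOf_dvd_iff_zpow_eq_one, orderOf_map_g] at map_u
    exact map_u.imp fun _ hm => congrArg (g ^ ·) hm
  · rintro ⟨k, rfl⟩
    rw [map_zpow, ← orderOf_dvd_iff_zpow_eq_one, orderOf_map_g]
    exact dvd_mul_right _ _

variable {n : ℕ} {g : (ZMod n)ˣ} (hg : ∀ u : (ZMod n)ˣ, u ∈ Subgroup.zpowers g)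
  {χ : DirichletCharacter ℂ n} (hχ : orderOf χ = 4)

include hg hχ

lemma mem_peisertSet_iff (z : ZMod n) : z ∈ peisertSet n g ↔ χ z = 1 ∨ χ z = χ g := by
  have map_g_ne_zero : χ g ≠ 0 := (g.isUnit.map χ).ne_zero
  by_cases hz : IsUnit z
  · obtain ⟨u, rfl⟩ := hz
    have map_eq_map_g : χ u = χ g ↔ χ (g⁻¹ * u : (ZMod n)ˣ) = 1 := by
      rw [← mul_eq_left₀ map_g_ne_zero, ← map_mul, ← Units.val_mul, mul_inv_cancel_left]
    rw [map_eq_map_g, map_unit_eq_one_iff_exists_zpow hg, map_unit_eq_one_iff_exists_zpow hg,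
      ← exists_or, hχ]
    simp only [peisertSet, Set.mem_ofPred_eq, Units.val_inj, inv_mul_eq_iff_eq_mul, Nat.cast_ofNat]
  · have not_mem : z ∉ peisertSet n g := by
      rintro ⟨k, rfl | rfl⟩ <;> exact hz (Units.isUnit _)
    simp only [not_mem, χ.map_nonunit hz, zero_ne_one, map_g_ne_zero.symm, or_self]

lemma peisertGraph_adj_iff (hχneg : χ (-1) = 1) (x y : ZMod n) :
    (peisertGraph n g).Adj x y ↔ χ (x - y) = 1 ∨ χ (x - y) = χ g := by
  rw [peisertGraph, SimpleGraph.fromRel_adj, mem_peisertSet_iff hg hχ, mem_peisertSet_iff hg hχ,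
    ← even_of_map_neg_one hχneg (y - x), neg_sub, or_self, and_iff_right_iff_imp]
  have : Nontrivial (ZMod n) := by
    refine not_subsingleton_iff_nontrivial.mp fun _ => ?_
    have χ_eq_one : χ = 1 := MulChar.ext fun u => by
      rw [Subsingleton.elim u 1, Units.val_one, map_one, map_one]
    rw [χ_eq_one, orderOf_one] at hχ
    lia
  rintro h rfl
  rw [sub_self, MulChar.map_zero] at h
  exact h.elim zero_ne_one (g.isUnit.map χ).ne_zero.symm

lemma card_cliqueFinset_four_peisertGraph [NeZero n] (hχneg : χ (-1) = 1) :
    24 * (#((peisertGraph n g).cliqueFinset 4) : ℂ) =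
      edgeSum (quarticInd χ (χ g)) (quarticInd χ (χ g)) (quarticInd χ (χ g))
        (quarticInd χ (χ g)) (quarticInd χ (χ g)) (quarticInd χ (χ g)) :=
  card_cliqueFinset_four _ fun x y => by
    classical
    exact if_congr (peisertGraph_adj_iff hg hχ hχneg x y).symm rfl rfl

end PeisertGraph

section PrimeModEight

variable {p : ℕ} [Fact p.Prime]

lemma exists_sq_eq_two_of_mod_eight_eq_one (hp8 : p % 8 = 1) : ∃ s : ZMod p, s ^ 2 = 2 := by
  obtain ⟨s, hs⟩ := (ZMod.exists_sq_eq_two_iff (p := p) (by lia)).mpr (Or.inl hp8)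
  exact ⟨s, by rw [hs, sq]⟩

lemma exists_pow_four_eq_neg_one_of_mod_eight_eq_one (hp8 : p % 8 = 1) :
    ∃ t : ZMod p, t ^ 4 = -1 := by
  obtain ⟨s, hs⟩ := exists_sq_eq_two_of_mod_eight_eq_one hp8
  obtain ⟨i, hi⟩ := (ZMod.exists_sq_eq_neg_one_iff (p := p)).mpr (by lia)
  have two_ne_zero_mod_p : (2 : ZMod p) ≠ 0 :=
    Ring.two_ne_zero (by rw [ZMod.ringChar_zmod_n]; lia)
  have s_ne_zero : s ≠ 0 := by
    rintro rfl
    exact two_ne_zero_mod_p (by rw [← hs, zero_pow two_ne_zero])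
  -- `(1 + i) / √2` is a primitive eighth root of unity.
  refine ⟨(1 + i) / s, ?_⟩
  rw [div_pow, div_eq_iff (pow_ne_zero _ s_ne_zero)]
  linear_combination (-s ^ 2 - 2) * (-hs) - (i ^ 2 + 4 * i + 5) * hi

variable (hp8 : p % 8 = 1)

include hp8

lemma map_neg_one_eq_one_of_pow_four_eq_one {ψ : DirichletCharacter ℂ p} (hψ : ψ ^ 4 = 1) :
    ψ (-1) = 1 := by
  obtain ⟨t, ht⟩ := exists_pow_four_eq_neg_one_of_mod_eight_eq_one hp8
  have ht_unit : IsUnit t := (isUnit_pow_iff four_ne_zero).mp (ht ▸ isUnit_one.neg)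
  rw [← ht, map_pow, map_pow_eq_one_of_isUnit hψ ht_unit]

lemma map_four_eq_one_of_pow_four_eq_one {ψ : DirichletCharacter ℂ p} (hψ : ψ ^ 4 = 1) :
    ψ 4 = 1 := by
  obtain ⟨s, hs⟩ := exists_sq_eq_two_of_mod_eight_eq_one hp8
  have hs_unit : IsUnit s := by
    refine (isUnit_pow_iff two_ne_zero).mp (hs ▸ isUnit_iff_ne_zero.mpr ?_)
    exact Ring.two_ne_zero (by rw [ZMod.ringChar_zmod_n]; lia)
  rw [show (4 : ZMod p) = s ^ 4 by linear_combination -(s ^ 2 + 2) * hs, map_pow,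
    map_pow_eq_one_of_isUnit hψ hs_unit]

end PrimeModEight

section PrimePower

variable {p k : ℕ} [Fact p.Prime] (hp8 : p % 8 = 1)
  {χ : DirichletCharacter ℂ (p ^ (k + 1))} (hχ : orderOf χ = 4)

include hp8 hχ

lemma map_neg_one_eq_one_of_orderOf_eq_four : χ (-1) = 1 := by
  obtain ⟨ψ, hψ, rfl⟩ := exists_orderOf_eq_four_changeLevel_eq (dvd_pow_self p k.succ_ne_zero)
    (Nat.odd_iff.mpr (by lia)) hχ
  rw [changeLevel_apply_castHom, map_neg, map_one,
    map_neg_one_eq_one_of_pow_four_eq_one hp8 (hψ ▸ pow_orderOf_eq_one ψ)]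

lemma jacobiSum_sq_eq_jacobiSum_self_of_prime_pow : jacobiSum χ (χ ^ 2) = jacobiSum χ χ := by
  obtain ⟨ψ, hψ, rfl⟩ := exists_orderOf_eq_four_changeLevel_eq (dvd_pow_self p k.succ_ne_zero)
    (Nat.odd_iff.mpr (by lia)) hχ
  rw [← map_pow, jacobiSum_changeLevel, jacobiSum_changeLevel, jacobiSum_sq_eq_jacobiSum_self
    (by rw [ZMod.ringChar_zmod_n]; lia) hψ
    (map_four_eq_one_of_pow_four_eq_one hp8 (hψ ▸ pow_orderOf_eq_one ψ))]

lemma edgeSum_quarticInd_of_prime_pow {ω : ℂ} (hω : ω ^ 2 = -1) :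
    edgeSum (quarticInd χ ω) (quarticInd χ ω) (quarticInd χ ω) (quarticInd χ ω)
        (quarticInd χ ω) (quarticInd χ ω) =
      (p : ℂ) ^ (2 * k + 1) * (p - 1) / 128 *
        (2 * (p : ℂ) ^ (2 * k) * ((p : ℂ) ^ 2 - 20 * p + 81) + 6 * ((jacobiSum χ χ).im : ℂ) ^ 2 -
          ((normalizedEdgeSum χ⁻¹ χ χ⁻¹ χ⁻¹ χ⁻¹).re : ℂ) +
          3 * normalizedEdgeSum χ χ χ χ⁻¹ χ⁻¹) := by
  obtain ⟨ψ, hψ, rfl⟩ := exists_orderOf_eq_four_changeLevel_eq (dvd_pow_self p k.succ_ne_zero)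
    (Nat.odd_iff.mpr (by lia)) hχ
  have ψ_even : Function.Even ψ := even_of_map_neg_one
    (map_neg_one_eq_one_of_pow_four_eq_one hp8 (hψ ▸ pow_orderOf_eq_one ψ))
  have re_pow_mul (n : ℕ) (z : ℂ) : (((p : ℂ) ^ n * z).re : ℂ) = (p : ℂ) ^ n * z.re := by
    rw [← Complex.ofReal_natCast, ← Complex.ofReal_pow, Complex.re_ofReal_mul, Complex.ofReal_mul]
  have im_pow_mul (n : ℕ) (z : ℂ) : (((p : ℂ) ^ n * z).im : ℂ) = (p : ℂ) ^ n * z.im := by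
    rw [← Complex.ofReal_natCast, ← Complex.ofReal_pow, Complex.im_ofReal_mul, Complex.ofReal_mul]
  rw [quarticInd_changeLevel, edgeSum_comp_castHom, edgeSum_quarticInd hψ ψ_even hω, ZMod.card]
  simp only [← map_inv, normalizedEdgeSum_changeLevel, jacobiSum_changeLevel, re_pow_mul,
    im_pow_mul]
  ring

end PrimePower

theorem k4_peisert_like (p α : ℕ) (hp : p.Prime) (hp8 : p % 8 = 1) (hα : 1 ≤ α)
    (q : ℕ) (hq : q = p ^ α) [NeZero q]
    (g : (ZMod q)ˣ) (hg : ∀ u : (ZMod q)ˣ, u ∈ Subgroup.zpowers g)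
    (χ₄ : DirichletCharacter ℂ q) (hord : orderOf χ₄ = 4) :
    let ρ : ℂ := jacobiSum χ₄ χ₄
    let ξ : ℂ := jacobiSum χ₄ (χ₄ ^ 2)
    let M₃ : ℂ := (q : ℂ) ^ 2 * threeF₂ χ₄ (conjChar χ₄) (conjChar χ₄) (χ₄ ^ 2) 1 1
    let M₅ : ℂ := (q : ℂ) ^ 2 * threeF₂ χ₄ χ₄ (conjChar χ₄) 1 1 1
    (((peisertGraph q g).cliqueFinset 4).card : ℂ) =
      (p : ℂ) ^ (2 * α - 1) * ((p : ℂ) - 1) / 3072 *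
        (2 * (p : ℂ) ^ (2 * α - 2) * ((p : ℂ) ^ 2 - 20 * (p : ℂ) + 81) +
          2 * (ρ.im : ℂ) ^ 2 + 4 * (ρ.im : ℂ) * (ξ.im : ℂ) - (M₃.re : ℂ) + 3 * M₅) := by
  intro ρ ξ M₃ M₅
  obtain ⟨k, rfl⟩ := Nat.exists_eq_add_of_le' hα
  subst hq
  have : Fact p.Prime := ⟨hp⟩
  have χ₄_neg_one : χ₄ (-1) = 1 := map_neg_one_eq_one_of_orderOf_eq_four hp8 hord
  have ξ_eq : ξ = ρ := jacobiSum_sq_eq_jacobiSum_self_of_prime_pow hp8 hord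
  have M₃_eq : M₃ = normalizedEdgeSum χ₄⁻¹ χ₄ χ₄⁻¹ χ₄⁻¹ χ₄⁻¹ :=
    sq_mul_threeF₂_conj_conj_sq_one χ₄_neg_one
  have M₅_eq : M₅ = normalizedEdgeSum χ₄ χ₄ χ₄ χ₄⁻¹ χ₄⁻¹ := sq_mul_threeF₂_self_conj_one χ₄_neg_one
  have clique_count := card_cliqueFinset_four_peisertGraph hg hord χ₄_neg_one
  rw [edgeSum_quarticInd_of_prime_pow hp8 hord (map_generator_sq_eq_neg_one hg hord)]
    at clique_count
  rw [ξ_eq, M₃_eq, M₅_eq, show 2 * (k + 1) - 1 = 2 * k + 1 by lia,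
    show 2 * (k + 1) - 2 = 2 * k by lia]
  linear_combination clique_count / 24
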